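/- Let T* and x* be real numbers and define u(x, t) = (T* − t)^{1/2} · W̄((x − x*)·(T* − t)^{−3/2}) for all x ∈ ℝ and t < T*. Then u solves the inviscid Burgers equation: at every point (x, t) with t < T*, ∂ₜu(x, t) + u(x, t)·∂ₓu(x, t) = 0. -/

import Mathlib

/-- The stable self-similar Burgers profile `W̄`. -/
noncomputable def Wbar (y : ℝ) : ℝ :=
  (-y / 2 + Real.sqrt (1 / 27 + y ^ 2 / 4)) ^ ((1 : ℝ) / 3) -
  (y / 2 + Real.sqrt (1 / 27 + y ^ 2 / 4)) ^ ((1 : ℝ) / 3)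

theorem Wbar_pos_aux (y : ℝ) :
    0 < -y / 2 + Real.sqrt (1 / 27 + y ^ 2 / 4) ∧ 0 < y / 2 + Real.sqrt (1 / 27 + y ^ 2 / 4) := by
  have h : |y / 2| < Real.sqrt (1 / 27 + y ^ 2 / 4) := by
    apply Real.lt_sqrt_of_sq_lt
    rw [sq_abs]
    nlinarith
  have := abs_lt.1 h
  constructor <;> linarith

theorem Wbar_cubic (y : ℝ) : Wbar y ^ 3 + Wbar y + y = 0 := by
  obtain ⟨h1, h2⟩ := Wbar_pos_aux y
  have hs : Real.sqrt (1 / 27 + y ^ 2 / 4) ^ 2 = 1 / 27 + y ^ 2 / 4 :=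
    Real.sq_sqrt (by positivity)
  unfold Wbar
  set s := Real.sqrt (1 / 27 + y ^ 2 / 4)
  have ha : ((-y / 2 + s) ^ ((1 : ℝ) / 3)) ^ 3 = -y / 2 + s := by
    rw [← Real.rpow_natCast, ← Real.rpow_mul h1.le]; norm_num
  have hb : ((y / 2 + s) ^ ((1 : ℝ) / 3)) ^ 3 = y / 2 + s := by
    rw [← Real.rpow_natCast, ← Real.rpow_mul h2.le]; norm_num
  have hab : (-y / 2 + s) ^ ((1 : ℝ) / 3) * (y / 2 + s) ^ ((1 : ℝ) / 3) = 1 / 3 := by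
    have h0 : 0 ≤ (-y / 2 + s) ^ ((1 : ℝ) / 3) * (y / 2 + s) ^ ((1 : ℝ) / 3) := by positivity
    refine (pow_left_inj₀ h0 (by norm_num) (n := 3) (by norm_num)).1 ?_
    rw [mul_pow, ha, hb]
    linear_combination hs
  generalize (-y / 2 + s) ^ ((1 : ℝ) / 3) = a at *
  generalize (y / 2 + s) ^ ((1 : ℝ) / 3) = b at *
  linear_combination ha - hb - 3 * (a - b) * hab

theorem Wbar_differentiableAt (y : ℝ) : DifferentiableAt ℝ Wbar y := by
  obtain ⟨h1, h2⟩ := Wbar_pos_aux y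
  have h3 : (1 / 27 + y ^ 2 / 4 : ℝ) ≠ 0 := by positivity
  have hs : DifferentiableAt ℝ (fun y : ℝ => Real.sqrt (1 / 27 + y ^ 2 / 4)) y :=
    DifferentiableAt.sqrt (by fun_prop) h3
  unfold Wbar
  apply DifferentiableAt.sub
  · exact DifferentiableAt.rpow_const (DifferentiableAt.add (by fun_prop) hs) (Or.inl h1.ne')
  · exact DifferentiableAt.rpow_const (DifferentiableAt.add (by fun_prop) hs) (Or.inl h2.ne')

theorem Wbar_ode (y : ℝ) :
    -(1 / 2) * Wbar y + ((3 / 2) * y + Wbar y) * deriv Wbar y = 0 := by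
  have hd := (Wbar_differentiableAt y).hasDerivAt
  have h := ((hd.pow 3).add hd).add (hasDerivAt_id y)
  have h0 : HasDerivAt (Wbar ^ 3 + Wbar + id) 0 y := by
    have : (Wbar ^ 3 + Wbar + id) = fun _ => (0 : ℝ) := by
      funext z; simpa using Wbar_cubic z
    rw [this]; exact hasDerivAt_const _ _
  have e := h.unique h0
  have c := Wbar_cubic y
  norm_num at e
  linear_combination (3 / 2) * deriv Wbar y * c - (1 / 2) * Wbar y * e

/-- The self-similar function `u(x,t) = (T∗ − t)^{1/2} W̄((x − x∗)(T∗ − t)^{−3/2})` solves the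
inviscid Burgers equation `∂ₜu + u ∂ₓu = 0` for `t < T∗`. -/
theorem selfSimilar_solves_burgers (Tstar xstar : ℝ) (u : ℝ → ℝ → ℝ)
    (hu : ∀ x t : ℝ, t < Tstar →
      u x t = (Tstar - t) ^ ((1 : ℝ) / 2) * Wbar ((x - xstar) * (Tstar - t) ^ (-(3 : ℝ) / 2))) :
    ∀ x t : ℝ, t < Tstar →
      deriv (fun t' => u x t') t + u x t * deriv (fun x' => u x' t) x = 0 := by
  intro x t ht
  have hs : 0 < Tstar - t := sub_pos.2 ht
  have hW := (Wbar_differentiableAt ((x - xstar) * (Tstar - t) ^ (-(3 : ℝ) / 2))).hasDerivAt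
  have hode := Wbar_ode ((x - xstar) * (Tstar - t) ^ (-(3 : ℝ) / 2))
  have hT : HasDerivAt (fun t' : ℝ => Tstar - t') (-1) t := by
    simpa using (hasDerivAt_id t).const_sub Tstar
  have d1 := hT.rpow_const (p := (1 : ℝ) / 2) (Or.inl hs.ne')
  have d2 := (hT.rpow_const (p := -(3 : ℝ) / 2) (Or.inl hs.ne')).const_mul (x - xstar)
  have dt := d1.mul (HasDerivAt.comp t hW d2)
  have d3 := ((hasDerivAt_id x).sub_const xstar).mul_const ((Tstar - t) ^ (-(3 : ℝ) / 2))
  have dx := (HasDerivAt.comp x hW d3).const_mul ((Tstar - t) ^ ((1 : ℝ) / 2))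
  have et : (fun t' => u x t') =ᶠ[nhds t] _ :=
    (eventually_lt_nhds ht).mono fun t' h => hu x t' h
  have ex : (fun x' => u x' t) = _ := funext fun x' => hu x' t ht
  have Dt := (dt.congr_of_eventuallyEq et).deriv
  have Dx' := (dx.congr_of_eventuallyEq (Filter.EventuallyEq.of_eq ex)).deriv
  rw [Dt, Dx', hu x t ht]
  have e1 : (Tstar - t) ^ ((1 : ℝ) / 2 - 1) = ((Tstar - t) ^ ((1 : ℝ) / 2))⁻¹ := by
    rw [← Real.rpow_neg hs.le]; norm_num
  have e2 : (Tstar - t) ^ (-(3 : ℝ) / 2) = (((Tstar - t) ^ ((1 : ℝ) / 2)) ^ 3)⁻¹ := by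
    rw [← Real.rpow_natCast, ← Real.rpow_mul hs.le, ← Real.rpow_neg hs.le]; norm_num
  have e3 : (Tstar - t) ^ (-(3 : ℝ) / 2 - 1) = (((Tstar - t) ^ ((1 : ℝ) / 2)) ^ 5)⁻¹ := by
    rw [← Real.rpow_natCast, ← Real.rpow_mul hs.le, ← Real.rpow_neg hs.le]; norm_num
  have hp : 0 < (Tstar - t) ^ ((1 : ℝ) / 2) := by positivity
  simp only [Function.comp, e1, e2, e3] at hode ⊢
  generalize (Tstar - t) ^ ((1 : ℝ) / 2) = p at *
  generalize deriv Wbar ((x - xstar) * (p ^ 3)⁻¹) = D at *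
  generalize Wbar ((x - xstar) * (p ^ 3)⁻¹) = W at *
  have hp' := hp.ne'
  have key : p⁻¹ * (-(1 / 2) * W + ((3 / 2) * ((x - xstar) * (p ^ 3)⁻¹) + W) * D) = 0 := by
    rw [hode, mul_zero]
  rw [← key]
  field_simp
  ring
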